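/- arXiv:2511.19139 — 2 statements merged into one kernel-verified Lean document; each statement's English description precedes it below -/
import Mathlib

section
/- Let γ ∈ SL(2,ℤ) and k ≥ 1 with det(1 - γ^k) ≠ 0, and let d ≥ 1 be a divisor of k. Multiplication by γ^d induces a well-defined ℤ-linear endomorphism of Q_k(γ) = coker(1 - γ^k), and the number of fixed points of this endomorphism equals |det(1 - γ^d)| = |tr(γ^d) - 2|. -/
/-- `Q_k(γ) = coker(1 - γ^k)`, the cokernel of `1 - γ^k` acting on `Fin 2 → ℤ`. -/
abbrev Qk (γ : Matrix.SpecialLinearGroup (Fin 2) ℤ) (k : ℕ) :=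
  (Fin 2 → ℤ) ⧸ LinearMap.range (Matrix.toLin'
    (1 - ((γ ^ k : Matrix.SpecialLinearGroup (Fin 2) ℤ) : Matrix (Fin 2) (Fin 2) ℤ)))

/-!
Write `a = 1 - φ ^ d` and `1 - φ ^ k = a * s = s * a`, where `s` is a geometric sum in `φ ^ d`.
The fixed points of `φ ^ d` on `coker (a * s)` form the kernel of the endomorphism induced by `a`.
As `a` is injective, this kernel is the image of `s` in `coker (s * a)`; as `s` is injective, that
image is isomorphic to `coker a`, which has `|det a|` elements.
-/

section Cokernel

variable {R M N P : Type*} [Ring R] [AddCommGroup M] [Module R M]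
  [AddCommGroup N] [Module R N] [AddCommGroup P] [Module R P]

theorem exists_end_quotient_range_of_commute {f b : Module.End R M} (h : Commute f b) :
    ∃ g : Module.End R (M ⧸ LinearMap.range b), ∀ v : M,
      g (Submodule.Quotient.mk v) = Submodule.Quotient.mk (f v) := by
  have range_le : LinearMap.range b ≤ (LinearMap.range b).comap f := by
    rintro _ ⟨w, rfl⟩
    exact ⟨f w, (LinearMap.congr_fun h.eq w).symm⟩
  exact ⟨Submodule.mapQ _ _ f range_le, Submodule.mapQ_apply _ _ f⟩

theorem ker_mkQ_comp_eq_range {f : N →ₗ[R] P} {g : M →ₗ[R] N} {b : M →ₗ[R] P}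
    (hfg : f ∘ₗ g = b) (hf : Function.Injective f) :
    LinearMap.ker ((LinearMap.range b).mkQ ∘ₗ f) = LinearMap.range g := by
  rw [LinearMap.ker_comp, Submodule.ker_mkQ, ← hfg, LinearMap.range_comp,
    Submodule.comap_map_eq_of_injective hf]

theorem ker_eq_range_mkQ_comp {f : N →ₗ[R] P} {g : M →ₗ[R] N} {b : M →ₗ[R] P}
    (hfg : f ∘ₗ g = b) (hf : Function.Injective f) {p : Submodule R N}
    {h : N ⧸ p →ₗ[R] P ⧸ LinearMap.range b}
    (hh : h ∘ₗ p.mkQ = (LinearMap.range b).mkQ ∘ₗ f) :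
    LinearMap.ker h = LinearMap.range (p.mkQ ∘ₗ g) := by
  have comap_ker : (LinearMap.ker h).comap p.mkQ = LinearMap.range g := by
    rw [← LinearMap.ker_comp, hh, ker_mkQ_comp_eq_range hfg hf]
  rw [LinearMap.range_comp, ← comap_ker,
    Submodule.map_comap_eq_of_surjective p.mkQ_surjective]

theorem nonempty_quotient_range_equiv_ker {a s b : Module.End R M} (has : a * s = b)
    (hsa : s * a = b) (hb : Function.Injective b) {h : Module.End R (M ⧸ LinearMap.range b)}
    (hh : h ∘ₗ (LinearMap.range b).mkQ = (LinearMap.range b).mkQ ∘ₗ a) :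
    Nonempty ((M ⧸ LinearMap.range a) ≃ₗ[R] LinearMap.ker h) := by
  have ha : Function.Injective a := .of_comp (f := s) (by rwa [← Module.End.coe_mul, hsa])
  have hs : Function.Injective s := .of_comp (f := a) (by rwa [← Module.End.coe_mul, has])
  rw [ker_eq_range_mkQ_comp has ha hh, ← ker_mkQ_comp_eq_range hsa hs]
  exact ⟨LinearMap.quotKerEquivRange _⟩

end Cokernel

section FreeIntModule

variable {L : Type*} [AddCommGroup L] [Module.Free ℤ L] [Module.Finite ℤ L]

theorem natCard_quotient_range_eq_natAbs_det {f : Module.End ℤ L} (hf : Function.Injective f) :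
    Nat.card (L ⧸ LinearMap.range f) = (LinearMap.det f).natAbs :=
  (Submodule.natAbs_det_equiv _ (LinearEquiv.ofInjective f hf)).symm

theorem natCard_fixedPoints_quotient_range {φ s b : Module.End ℤ L} (hφs : (1 - φ) * s = b)
    (hsφ : s * (1 - φ) = b) (hb : Function.Injective b)
    {g : Module.End ℤ (L ⧸ LinearMap.range b)}
    (hg : ∀ v : L, g (Submodule.Quotient.mk v) = Submodule.Quotient.mk (φ v)) :
    Nat.card {x // g x = x} = (LinearMap.det (1 - φ)).natAbs := by
  have one_sub_comp_mkQ :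
      (1 - g) ∘ₗ (LinearMap.range b).mkQ = (LinearMap.range b).mkQ ∘ₗ (1 - φ) := by
    ext v
    simp [hg]
  have injective_one_sub : Function.Injective ⇑(1 - φ) :=
    .of_comp (f := s) (by rwa [← Module.End.coe_mul, hsφ])
  obtain ⟨e⟩ := nonempty_quotient_range_equiv_ker hφs hsφ hb one_sub_comp_mkQ
  rw [← natCard_quotient_range_eq_natAbs_det injective_one_sub, Nat.card_congr e.toEquiv]
  refine Nat.card_congr (Equiv.subtypeEquivRight fun x ↦ ?_)
  rw [LinearMap.mem_ker, LinearMap.sub_apply, Module.End.one_apply, sub_eq_zero, eq_comm]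

theorem stmt5_general (φ : Module.End ℤ L) {k d : ℕ} (hdk : d ∣ k)
    (hdet : LinearMap.det (1 - φ ^ k) ≠ 0) :
    (∃ g : Module.End ℤ (L ⧸ LinearMap.range (1 - φ ^ k)), ∀ v : L,
      g (Submodule.Quotient.mk v) = Submodule.Quotient.mk ((φ ^ d) v)) ∧
    ∀ g : Module.End ℤ (L ⧸ LinearMap.range (1 - φ ^ k)),
      (∀ v : L, g (Submodule.Quotient.mk v) = Submodule.Quotient.mk ((φ ^ d) v)) →
      Nat.card {x // g x = x} = (LinearMap.det (1 - φ ^ d)).natAbs := by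
  have commute : Commute (φ ^ d) (1 - φ ^ k) :=
    (Commute.one_right _).sub_right (Commute.pow_pow_self φ d k)
  have injective : Function.Injective ⇑(1 - φ ^ k) :=
    LinearMap.ker_eq_bot.mp (LinearMap.det_eq_zero_iff_ker_ne_bot.not_left.mp hdet)
  refine ⟨exists_end_quotient_range_of_commute commute, fun g hg ↦ ?_⟩
  obtain ⟨m, rfl⟩ := hdk
  refine natCard_fixedPoints_quotient_range (s := ∑ i ∈ Finset.range m, (φ ^ d) ^ i) ?_ ?_
    injective hg
  · rw [mul_neg_geom_sum, pow_mul]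
  · rw [geom_sum_mul_neg, pow_mul]

end FreeIntModule

theorem det_one_sub_fin_two {R : Type*} [CommRing R] (A : Matrix (Fin 2) (Fin 2) R) :
    (1 - A).det = 1 - A.trace + A.det := by
  simp only [Matrix.det_fin_two, Matrix.trace_fin_two, Matrix.sub_apply, Matrix.one_apply_eq,
    Matrix.one_apply_ne, ne_eq, zero_ne_one, one_ne_zero, not_false_eq_true]
  ring

theorem det_one_sub_specialLinearGroup_fin_two {R : Type*} [CommRing R]
    (γ : Matrix.SpecialLinearGroup (Fin 2) R) :
    (1 - (γ : Matrix (Fin 2) (Fin 2) R)).det = 2 - (γ : Matrix (Fin 2) (Fin 2) R).trace := by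
  rw [det_one_sub_fin_two, γ.det_coe]
  ring

theorem toLin'_one_sub_coe_pow {n R : Type*} [Fintype n] [DecidableEq n] [CommRing R]
    (γ : Matrix.SpecialLinearGroup n R) (j : ℕ) :
    Matrix.toLin' (1 - ((γ ^ j : Matrix.SpecialLinearGroup n R) : Matrix n n R)) =
      1 - Matrix.toLin' (γ : Matrix n n R) ^ j := by
  rw [map_sub, Matrix.toLin'_one, Matrix.SpecialLinearGroup.coe_pow, Matrix.toLin'_pow,
    Module.End.one_eq_id]

/-- if `det(1 - γ^k) ≠ 0` and `d ∣ k` with `d ≥ 1`, then multiplication by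
`γ^d` induces a well-defined `ℤ`-linear endomorphism of `Q_k(γ)`, and the number of its
fixed points equals `|det(1 - γ^d)| = |tr(γ^d) - 2|`. -/
theorem stmt5 (γ : Matrix.SpecialLinearGroup (Fin 2) ℤ) (k d : ℕ)
    (hk : 1 ≤ k) (hd : 1 ≤ d) (hdk : d ∣ k)
    (hdet : (1 - ((γ ^ k : Matrix.SpecialLinearGroup (Fin 2) ℤ) :
        Matrix (Fin 2) (Fin 2) ℤ)).det ≠ 0) :
    (∃ g : Module.End ℤ (Qk γ k), ∀ v : Fin 2 → ℤ,
      g (Submodule.Quotient.mk v) =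
        Submodule.Quotient.mk (Matrix.mulVec
          ((γ ^ d : Matrix.SpecialLinearGroup (Fin 2) ℤ) : Matrix (Fin 2) (Fin 2) ℤ) v)) ∧
    ∀ g : Module.End ℤ (Qk γ k),
      (∀ v : Fin 2 → ℤ, g (Submodule.Quotient.mk v) =
        Submodule.Quotient.mk (Matrix.mulVec
          ((γ ^ d : Matrix.SpecialLinearGroup (Fin 2) ℤ) : Matrix (Fin 2) (Fin 2) ℤ) v)) →
      Nat.card {x : Qk γ k // g x = x} =
          ((1 - ((γ ^ d : Matrix.SpecialLinearGroup (Fin 2) ℤ) :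
            Matrix (Fin 2) (Fin 2) ℤ)).det).natAbs ∧
        ((1 - ((γ ^ d : Matrix.SpecialLinearGroup (Fin 2) ℤ) :
            Matrix (Fin 2) (Fin 2) ℤ)).det).natAbs =
          (Matrix.trace ((γ ^ d : Matrix.SpecialLinearGroup (Fin 2) ℤ) :
            Matrix (Fin 2) (Fin 2) ℤ) - 2).natAbs := by
  have general := stmt5_general (Matrix.toLin' (γ : Matrix (Fin 2) (Fin 2) ℤ)) hdk
  rw [← toLin'_one_sub_coe_pow, ← toLin'_one_sub_coe_pow, ← Matrix.toLin'_pow,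
    ← Matrix.SpecialLinearGroup.coe_pow, LinearMap.det_toLin', LinearMap.det_toLin'] at general
  exact (general hdet).imp_right fun card_eq g hg ↦
    ⟨card_eq g hg, by rw [det_one_sub_specialLinearGroup_fin_two, ← Int.natAbs_neg, neg_sub]⟩
end

section
/- Let γ ∈ SL(2,ℤ), N ≥ 1, and w ∈ Equiv.Perm (Fin N). Let L be the ℤ-linear endomorphism of (Fin N → (Fin 2 → ℤ)) given by (L v) i = v i - γ ⬝ v (w⁻¹ i), and let C be the cokernel of L. Every σ in the centralizer Z of w in Equiv.Perm (Fin N) commutes with L via the action (σ · v) i = v (σ⁻¹ i), hence Z acts ℤ-linearly on C, preserving the torsion submodule C_tors. Then the number of orbits of Z acting on C_tors equals ∏_{k=1}^{N} C(c_k(γ) + r_k - 1, r_k), where r_k is the number of orbits of ⟨w⟩ on Fin N of cardinality k (the number of k-cycles of w, with fixed points counted as 1-cycles), C(a,b) denotes the binomial coefficient, and c_k(γ) is defined below. -/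
/-!
In the cokernel of `1 - w ⊗ A` a vector `u` placed at `i` equals `A u` placed at `w i`. Pushing all
values along each orbit of `w` to its representative therefore identifies this cokernel with the
product over the orbits `o` of `coker (1 - A ^ |o|)`, and replacing the representative by its image
under `w` acts on the factor through `A`. The centralizer of `w` permutes the orbits of equal size
and moves the representatives along their orbits arbitrarily, so two elements are conjugate under it
if and only if, for each `k`, their families of `A`-orbits indexed by the `k`-cycles agree up to a
permutation. Such classes of families are multisets of size `r_k`, hence the binomial coefficients.
-/

open MulAction Function

section Counting

theorem card_quot_eq_card_of_surjective {α β : Type*} {r : α → α → Prop} {f : α → β}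
    (hf : Surjective f) (hr : ∀ x y, r x y ↔ f x = f y) : Nat.card (Quot r) = Nat.card β := by
  obtain rfl : r = Setoid.ker f := by ext x y; exact hr x y
  exact Nat.card_congr (Setoid.quotientKerEquivOfSurjective f hf)

theorem map_univ_eq_map_univ_iff {α β : Type*} [Fintype α] (f g : α → β) :
    Finset.univ.val.map f = Finset.univ.val.map g ↔ ∃ π : Equiv.Perm α, f = g ∘ π := by
  classical
  constructor
  · intro h
    have fiberEquiv (b : β) : Nonempty ({a // f a = b} ≃ {a // g a = b}) := by
      have hb := congrArg (Multiset.count b) h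
      simp only [Multiset.count_map, eq_comm (a := b)] at hb
      rw [← Fintype.card_eq, Fintype.card_subtype, Fintype.card_subtype]
      exact hb
    refine ⟨Equiv.ofFiberEquiv fun b => (fiberEquiv b).some, funext fun a => ?_⟩
    exact (Equiv.ofFiberEquiv_map _ a).symm
  · rintro ⟨π, rfl⟩
    rw [← Multiset.map_map, Multiset.map_univ_val_equiv]

/-- The multiset of values of a function on a finite type, as an element of a symmetric power. -/
def symOfFun {α β : Type*} [Fintype α] (f : α → β) : Sym β (Fintype.card α) :=
  ⟨Finset.univ.val.map f, by simp⟩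

theorem symOfFun_eq_iff {α β : Type*} [Fintype α] {f g : α → β} :
    symOfFun f = symOfFun g ↔ ∃ π : Equiv.Perm α, f = g ∘ π :=
  Subtype.ext_iff.trans (map_univ_eq_map_univ_iff f g)

theorem symOfFun_surjective {α β : Type*} [Fintype α] :
    Surjective (symOfFun : (α → β) → Sym β (Fintype.card α)) := by
  rintro ⟨⟨l⟩, hl⟩
  let e : α ≃ Fin l.length := Fintype.equivFinOfCardEq hl.symm
  refine ⟨l.get ∘ e, Subtype.ext ?_⟩
  change Finset.univ.val.map (l.get ∘ e) = (l : Multiset β)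
  rw [← Multiset.map_map, Multiset.map_univ_val_equiv, Fin.univ_val_map, List.ofFn_get]

theorem card_quot_eq_prod_choose {T K : Type*} [Fintype K] {Ω X : K → Type*}
    [∀ k, Finite (Ω k)] {r : T → T → Prop} {F : T → ∀ k, Ω k → X k} (hF : Surjective F)
    (hr : ∀ x y, r x y ↔ ∀ k, ∃ π : Equiv.Perm (Ω k), F x k = F y k ∘ π) :
    Nat.card (Quot r) =
      ∏ k, (Nat.card (X k) + Nat.card (Ω k) - 1).choose (Nat.card (Ω k)) := by
  have (k : K) : Fintype (Ω k) := Fintype.ofFinite _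
  have hsym : Surjective fun x k => symOfFun (F x k) :=
    (Surjective.piMap fun _ => symOfFun_surjective).comp hF
  rw [card_quot_eq_card_of_surjective hsym fun x y => ?_, Nat.card_pi]
  · simp only [Sym.natCard_sym_eq_choose, Nat.card_eq_fintype_card]
  · simp only [hr, funext_iff, symOfFun_eq_iff]

end Counting

section GroupAction

theorem equivalence_exists_pow_smul {M X : Type*} [Monoid M] [MulAction M X] {a : M}
    (ha : IsOfFinOrder a) : Equivalence fun x y : X => ∃ j : ℕ, a ^ j • x = y where
  refl x := ⟨0, by rw [pow_zero, one_smul]⟩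
  symm := by
    rintro x _ ⟨j, rfl⟩
    obtain ⟨n, hn, han⟩ := isOfFinOrder_iff_pow_eq_one.1 ha
    have hnj : (n - 1) * j + j = n * j := by rw [← Nat.succ_mul, Nat.succ_eq_add_one,
      Nat.sub_add_cancel hn]
    exact ⟨(n - 1) * j, by rw [smul_smul, ← pow_add, hnj, pow_mul, han, one_pow, one_smul]⟩
  trans := by
    rintro x _ _ ⟨i, rfl⟩ ⟨j, rfl⟩
    exact ⟨j + i, by rw [pow_add, mul_smul]⟩

theorem exists_mulActionHom_out {G X Y : Type*} [Group G] [MulAction G X] [MulAction G Y]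
    (c : orbitRel.Quotient G X → Y) (hc : ∀ o, stabilizer G o.out ≤ stabilizer G (c o)) :
    ∃ f : X →[G] Y, ∀ o, f o.out = c o := by
  let := orbitRel G X
  have exists_smul_out (x : X) : ∃ g : G, g • (⟦x⟧ : orbitRel.Quotient G X).out = x :=
    Setoid.symm (Quotient.mk_out x)
  choose p hp using exists_smul_out
  have smul_eq_smul {g h : G} {o : orbitRel.Quotient G X} (hgh : g • o.out = h • o.out) :
      g • c o = h • c o := by
    rw [← inv_smul_eq_iff, smul_smul] at hgh ⊢
    exact hc o hgh
  refine ⟨⟨fun x => p x • c ⟦x⟧, fun g x => ?_⟩, fun o => ?_⟩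
  · change p (g • x) • c _ = g • p x • c _
    rw [orbitRel.Quotient.quotient_smul_eq, smul_smul]
    refine smul_eq_smul ?_
    rw [mul_smul, hp, ← orbitRel.Quotient.quotient_smul_eq (g := g), hp]
  · change p o.out • c _ = c o
    have := hp o.out
    rw [Quotient.out_eq] at this ⊢
    simpa using smul_eq_smul (this.trans (one_smul G _).symm)

theorem natCard_orbit_zpowers {G X : Type*} [Group G] [MulAction G X] (a : G) (x : X) :
    Nat.card (orbit (Subgroup.zpowers a) x) = minimalPeriod (a • ·) x := by
  rw [Nat.card_congr (orbitZPowersEquiv a x), Nat.card_zmod]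

end GroupAction

section PermOrbits

variable {I : Type*} {w : Equiv.Perm I}

/-- The set of orbits of the cyclic group generated by `w`, that is, of cycles of `w`, fixed points
included. -/
abbrev PermOrbit (w : Equiv.Perm I) : Type _ := orbitRel.Quotient (Subgroup.zpowers w) I

namespace PermOrbit

/-- The orbit of the point `i`. -/
abbrev mk (w : Equiv.Perm I) (i : I) : PermOrbit w := Quotient.mk _ i

theorem mk_out (o : PermOrbit w) : mk w o.out = o := Quotient.out_eq o

theorem mk_eq_mk_iff {i i' : I} : mk w i = mk w i' ↔ w.SameCycle i i' := by
  rw [eq_comm, Quotient.eq, orbitRel_apply, mem_orbit_iff, Subgroup.exists_zpowers]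
  rfl

theorem mk_zpow_apply (n : ℤ) (i : I) : mk w ((w ^ n) i) = mk w i :=
  mk_eq_mk_iff.2 (Equiv.Perm.sameCycle_zpow_left.2 (.refl w i))

theorem natCard_orbit_mk (i : I) : Nat.card (mk w i).orbit = minimalPeriod w i :=
  natCard_orbit_zpowers w i

theorem pow_apply_out {o : PermOrbit w} {k : ℕ} (hk : Nat.card o.orbit = k) :
    (w ^ k) o.out = o.out := by
  rw [← hk, ← mk_out o, natCard_orbit_mk, mk_out, ← Equiv.Perm.iterate_eq_pow,
    iterate_minimalPeriod]

section Commute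

variable {σ : Equiv.Perm I}

theorem pow_apply_eq_iff_of_commute (hσ : Commute σ w) {k : ℕ} {i : I} :
    (w ^ k) (σ i) = σ i ↔ (w ^ k) i = i := by
  rw [← Equiv.Perm.mul_apply, ← (hσ.pow_right k).eq, Equiv.Perm.mul_apply,
    EmbeddingLike.apply_eq_iff_eq]

theorem mk_apply_eq_mk_apply_iff (hσ : Commute σ w) {i i' : I} :
    mk w (σ i) = mk w (σ i') ↔ mk w i = mk w i' := by
  rw [mk_eq_mk_iff, mk_eq_mk_iff, ← inv_inv σ, ← Equiv.Perm.sameCycle_conj,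
    hσ.inv_left.mul_inv_cancel]

/-- The permutation of the orbits of `w` induced by a permutation commuting with `w`. -/
def congr (σ : Equiv.Perm I) (hσ : Commute σ w) : Equiv.Perm (PermOrbit w) :=
  Quotient.congr σ fun _ _ => by
    simpa only [Quotient.eq] using (mk_apply_eq_mk_apply_iff hσ).symm

theorem congr_mk (hσ : Commute σ w) (i : I) : congr σ hσ (mk w i) = mk w (σ i) := rfl

theorem natCard_orbit_congr (hσ : Commute σ w) (o : PermOrbit w) :
    Nat.card (congr σ hσ o).orbit = Nat.card o.orbit := by
  induction o using Quotient.inductionOn with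
  | h i =>
    rw [congr_mk, natCard_orbit_mk, natCard_orbit_mk, minimalPeriod_eq_minimalPeriod_iff]
    intro n
    simp only [IsPeriodicPt, IsFixedPt, Equiv.Perm.iterate_eq_pow]
    exact pow_apply_eq_iff_of_commute hσ

end Commute

variable [Finite I]

theorem natCard_orbit_mem_Icc (o : PermOrbit w) :
    Nat.card o.orbit ∈ Finset.Icc 1 (Nat.card I) := by
  have : Nonempty o.orbit := ⟨o.out, orbitRel.Quotient.mem_orbit.2 (mk_out o)⟩
  exact Finset.mem_Icc.2 ⟨Nat.card_pos, Finite.card_subtype_le _⟩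

theorem exists_pow_apply_eq {i i' : I} (h : mk w i = mk w i') : ∃ n : ℕ, (w ^ n) i = i' :=
  (mk_eq_mk_iff.1 h).exists_nat_pow_eq

theorem exists_mem_centralizer_forall_out {c : PermOrbit w → I}
    (hc : Surjective fun o => mk w (c o))
    (hcard : ∀ o, Nat.card (mk w (c o)).orbit = Nat.card o.orbit) :
    ∃ σ ∈ Subgroup.centralizer {w}, ∀ o, σ o.out = c o := by
  have stabilizer_le (o : PermOrbit w) :
      stabilizer (Subgroup.zpowers w) o.out ≤ stabilizer (Subgroup.zpowers w) (c o) := by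
    rintro ⟨_, n, rfl⟩ hn
    change w ^ n • c o = c o
    replace hn : w ^ n • o.out = o.out := hn
    have hper : minimalPeriod (w • ·) (c o) = minimalPeriod (w • ·) o.out := by
      have := hcard o
      rwa [natCard_orbit_mk, ← mk_out o, natCard_orbit_mk, mk_out] at this
    rw [zpow_smul_eq_iff_minimalPeriod_dvd] at hn ⊢
    rwa [hper]
  obtain ⟨f, hf⟩ := exists_mulActionHom_out c stabilizer_le
  have map_smul (n : ℤ) (i : I) : f ((w ^ n) i) = (w ^ n) (f i) := f.map_smul ⟨w ^ n, n, rfl⟩ i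
  have f_surjective : Surjective f := fun i => by
    obtain ⟨o, ho⟩ := hc (mk w i)
    obtain ⟨n, hn⟩ := mk_eq_mk_iff.1 ho
    exact ⟨(w ^ n) o.out, by rw [map_smul, hf, hn]⟩
  refine ⟨Equiv.ofBijective f (Finite.surjective_iff_bijective.1 f_surjective),
    Subgroup.mem_centralizer_singleton_iff.2 (Equiv.ext fun i => ?_), hf⟩
  exact map_smul 1 i

end PermOrbit

end PermOrbits

section Torsion

variable {R M : Type*} [CommRing R] [AddCommGroup M] [Module R M]

theorem map_mem_torsion {N : Type*} [AddCommGroup N] [Module R N] (f : M →ₗ[R] N) {x : M}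
    (hx : x ∈ Submodule.torsion R M) : f x ∈ Submodule.torsion R N := by
  obtain ⟨a, ha⟩ := Submodule.mem_torsion_iff x |>.1 hx
  exact Submodule.mem_torsion_iff _ |>.2 ⟨a, by
    rw [Submonoid.smul_def, ← map_smul, ← Submonoid.smul_def, ha, map_zero]⟩

theorem mem_torsion_of_forall_mem_torsion {ι : Type*} [Finite ι] {N : ι → Type*}
    [∀ i, AddCommGroup (N i)] [∀ i, Module R (N i)] {f : M →ₗ[R] ∀ i, N i} (hf : Injective f)
    {x : M} (hx : ∀ i, f x i ∈ Submodule.torsion R (N i)) : x ∈ Submodule.torsion R M := by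
  have := Fintype.ofFinite ι
  simp only [Submodule.mem_torsion_iff] at hx ⊢
  choose a ha using hx
  refine ⟨∏ i, a i, hf (funext fun i => ?_)⟩
  obtain ⟨b, hb⟩ := Finset.dvd_prod_of_mem a (Finset.mem_univ i)
  calc f ((∏ i, a i) • x) i = b • a i • f x i := by
        simp only [hb, mul_comm (a i), Submonoid.smul_def, mul_smul, map_smul,
          Pi.smul_apply]
    _ = f 0 i := by rw [ha, smul_zero, map_zero, Pi.zero_apply]

theorem finite_torsion_int (M : Type*) [AddCommGroup M] [Module.Finite ℤ M] :
    Finite (Submodule.torsion ℤ M) :=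
  Module.finite_of_fg_torsion _ Submodule.torsion_isTorsion

end Torsion

section PowCoker

variable {R V : Type*} [CommRing R] [AddCommGroup V] [Module R V] (A : Module.End R V) (k : ℕ)

/-- The cokernel `coker (1 - A ^ k)`. -/
abbrev PowCoker : Type _ := V ⧸ LinearMap.range (1 - A ^ k)

namespace PowCoker

/-- The endomorphism of `coker (1 - A ^ k)` induced by `A`. -/
def shift : Module.End R (PowCoker A k) :=
  Submodule.mapQ _ _ A <| by
    rintro _ ⟨u, rfl⟩
    exact ⟨A u, by simp [← Module.End.mul_apply, Commute.eq (Commute.self_pow A k)]⟩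

theorem shift_pow_mk (j : ℕ) (u : V) :
    (shift A k ^ j) (Submodule.Quotient.mk u) = Submodule.Quotient.mk ((A ^ j) u) := by
  induction j with
  | zero => rfl
  | succ j ih => rw [pow_succ', pow_succ', Module.End.mul_apply, ih]; rfl

theorem mk_pow_apply (u : V) :
    (Submodule.Quotient.mk ((A ^ k) u) : PowCoker A k) = Submodule.Quotient.mk u :=
  ((Submodule.Quotient.eq (LinearMap.range (1 - A ^ k))).2 ⟨u, rfl⟩).symm

theorem shift_pow_self : shift A k ^ k = 1 := by
  ext u
  exact (shift_pow_mk A k k u).trans (mk_pow_apply A k u)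

/-- The set of orbits of the action of `A` on the torsion submodule of `coker (1 - A ^ k)`. -/
abbrev TorsionOrbit : Type _ :=
  Quot fun x y : Submodule.torsion R (PowCoker A k) => ∃ j : ℕ, (shift A k ^ j) x = y

theorem equivalence_exists_shift_pow_torsion (hk : 0 < k) :
    Equivalence fun x y : Submodule.torsion R (PowCoker A k) => ∃ j : ℕ, (shift A k ^ j) x = y :=
  (equivalence_exists_pow_smul (isOfFinOrder_iff_pow_eq_one.2 ⟨k, hk, shift_pow_self A k⟩)).comap
    Subtype.val

end PowCoker

end PowCoker

section TwistCoker

variable {R V I : Type*} [CommRing R] [AddCommGroup V] [Module R V] (A : Module.End R V)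
  (w : Equiv.Perm I)

/-- The endomorphism `1 - w ⊗ A` of `I → V`. -/
def oneSubTwist : Module.End R (I → V) :=
  1 - LinearMap.pi fun i => A ∘ₗ LinearMap.proj (w⁻¹ i)

theorem oneSubTwist_apply (v : I → V) (i : I) : oneSubTwist A w v i = v i - A (v (w⁻¹ i)) := rfl

theorem oneSubTwist_comp_of_commute {σ : Equiv.Perm I} (hσ : Commute σ w) (v : I → V) :
    oneSubTwist A w (v ∘ σ) = oneSubTwist A w v ∘ σ := by
  ext i
  simp only [oneSubTwist_apply, comp_apply, ← Equiv.Perm.mul_apply, hσ.inv_right.eq]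

/-- The cokernel of `1 - w ⊗ A`. -/
abbrev TwistCoker : Type _ := (I → V) ⧸ LinearMap.range (oneSubTwist A w)

namespace TwistCoker

variable {A w}

theorem mk_comp_inv (v : I → V) :
    (Submodule.Quotient.mk fun i => A (v (w⁻¹ i)) : TwistCoker A w) = Submodule.Quotient.mk v :=
  ((Submodule.Quotient.eq (LinearMap.range (oneSubTwist A w))).2 ⟨v, rfl⟩).symm

theorem mk_single_pow_apply [DecidableEq I] (n : ℕ) (i : I) (u : V) :
    (Submodule.Quotient.mk (Pi.single ((w ^ n) i) ((A ^ n) u)) : TwistCoker A w) =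
      Submodule.Quotient.mk (Pi.single i u) := by
  induction n with
  | zero => rfl
  | succ n ih =>
    rw [← ih, ← mk_comp_inv (Pi.single ((w ^ n) i) _)]
    congr 1
    ext i'
    simp only [Pi.single_apply, pow_succ', Equiv.Perm.mul_apply, Module.End.mul_apply,
      Equiv.Perm.inv_eq_iff_eq, apply_ite A, map_zero]

variable (A w) in
/-- The sum of the values of a vector at the `k` points `i`, `w⁻¹ i`, …, each pushed forward to `i`
by the power of `A` that matches its distance from `i`. -/
def orbitSum (k : ℕ) (i : I) : (I → V) →ₗ[R] V :=
  ∑ j ∈ Finset.range k, (A ^ j) ∘ₗ LinearMap.proj ((w ^ j)⁻¹ i)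

theorem orbitSum_apply (k : ℕ) (i : I) (v : I → V) :
    orbitSum A w k i v = ∑ j ∈ Finset.range k, (A ^ j) (v ((w ^ j)⁻¹ i)) := by
  simp only [orbitSum, LinearMap.sum_apply, LinearMap.comp_apply, LinearMap.proj_apply]

theorem orbitSum_oneSubTwist {k : ℕ} {i : I} (hi : (w ^ k) i = i) (v : I → V) :
    orbitSum A w k i (oneSubTwist A w v) = (1 - A ^ k) (v i) := by
  have term_eq_sub (j : ℕ) : (A ^ j) (oneSubTwist A w v ((w ^ j)⁻¹ i)) =
      (A ^ j) (v ((w ^ j)⁻¹ i)) - (A ^ (j + 1)) (v ((w ^ (j + 1))⁻¹ i)) := by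
    rw [oneSubTwist_apply, map_sub, ← Module.End.mul_apply, ← pow_succ, ← Equiv.Perm.mul_apply,
      ← mul_inv_rev, ← pow_succ]
  rw [orbitSum_apply]
  simp only [term_eq_sub]
  rw [Finset.sum_range_sub' fun j => (A ^ j) (v ((w ^ j)⁻¹ i)), Equiv.Perm.inv_eq_iff_eq.2 hi.symm]
  rfl

theorem orbitSum_comp_inv (k : ℕ) (i : I) (v : I → V) :
    orbitSum A w k (w i) (fun i' => A (v (w⁻¹ i'))) = A (orbitSum A w k i v) := by
  have inv_pow_apply (j : ℕ) : w⁻¹ ((w ^ j)⁻¹ (w i)) = (w ^ j)⁻¹ i := by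
    rw [Equiv.Perm.inv_eq_iff_eq, ← Equiv.Perm.mul_apply, ← Equiv.Perm.mul_apply,
      (Commute.self_pow w j).inv_right.eq]
  simp only [orbitSum_apply, map_sum, inv_pow_apply, ← Module.End.mul_apply, ← pow_succ,
    ← pow_succ']

variable (A) in
/-- Evaluation of the cokernel of `1 - w ⊗ A` at a point `i` fixed by `w ^ k`, obtained by pushing
all values along the orbit of `i` forward to `i`. -/
def evalAt {k : ℕ} {i : I} (hi : (w ^ k) i = i) : TwistCoker A w →ₗ[R] PowCoker A k :=
  Submodule.mapQ _ _ (orbitSum A w k i) <| by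
    rintro _ ⟨v, rfl⟩
    exact ⟨v i, (orbitSum_oneSubTwist hi v).symm⟩

theorem evalAt_mk {k : ℕ} {i : I} (hi : (w ^ k) i = i) (v : I → V) :
    evalAt A hi (Submodule.Quotient.mk v) = Submodule.Quotient.mk (orbitSum A w k i v) := rfl

theorem evalAt_apply {k : ℕ} {i : I} (hi : (w ^ k) i = i) (hwi : (w ^ k) (w i) = w i)
    (x : TwistCoker A w) : evalAt A hwi x = PowCoker.shift A k (evalAt A hi x) := by
  induction x using Submodule.Quotient.induction_on with
  | H v =>
    rw [← mk_comp_inv, evalAt_mk, orbitSum_comp_inv, mk_comp_inv]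
    rfl

theorem evalAt_pow_apply {k n : ℕ} {i : I} (hi : (w ^ k) i = i)
    (hni : (w ^ k) ((w ^ n) i) = (w ^ n) i) (x : TwistCoker A w) :
    evalAt A hni x = (PowCoker.shift A k ^ n) (evalAt A hi x) := by
  induction n with
  | zero => rfl
  | succ n ih =>
    have hni := (PermOrbit.pow_apply_eq_iff_of_commute (Commute.pow_self w n)).2 hi
    simp only [pow_succ', Module.End.mul_apply, ← ih hni]
    exact evalAt_apply hni _ x

variable (A w) in
/-- The action of the centralizer of `w` on the cokernel of `1 - w ⊗ A`. -/
def permute (σ : Subgroup.centralizer {w}) : Module.End R (TwistCoker A w) :=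
  Submodule.mapQ _ _ (LinearMap.funLeft R V (σ⁻¹ : Subgroup.centralizer {w}).1) <| by
    rintro _ ⟨v, rfl⟩
    exact ⟨v ∘ _, oneSubTwist_comp_of_commute A w
      (Subgroup.mem_centralizer_singleton_iff.1 (σ⁻¹).2) v⟩

theorem evalAt_permute {k : ℕ} {i : I} (hi : (w ^ k) i = i) (σ : Subgroup.centralizer {w})
    {i' : I} (hi' : (w ^ k) i' = i') (h : σ.1 i = i') (x : TwistCoker A w) :
    evalAt A hi' (permute A w σ x) = evalAt A hi x := by
  subst h
  have hσ : Commute σ.1 w := Subgroup.mem_centralizer_singleton_iff.1 σ.2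
  induction x using Submodule.Quotient.induction_on with
  | H v =>
    refine congrArg Submodule.Quotient.mk ?_
    rw [orbitSum_apply, orbitSum_apply]
    refine Finset.sum_congr rfl fun j _ => congrArg (A ^ j) (congrArg v ?_)
    change σ.1⁻¹ ((w ^ j)⁻¹ (σ.1 i)) = (w ^ j)⁻¹ i
    rw [Equiv.Perm.inv_eq_iff_eq, ← Equiv.Perm.mul_apply, ← Equiv.Perm.mul_apply,
      (hσ.pow_right j).inv_right.eq]

variable (A) in
/-- The evaluation of the cokernel of `1 - w ⊗ A` at the representative of an orbit of size `k`. -/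
noncomputable def evalOut {k : ℕ} {o : PermOrbit w} (ho : Nat.card o.orbit = k) :
    TwistCoker A w →ₗ[R] PowCoker A k :=
  evalAt A (PermOrbit.pow_apply_out ho)

theorem orbitSum_single_of_mk_ne [DecidableEq I] {i i' : I}
    (h : PermOrbit.mk w i ≠ PermOrbit.mk w i') (k : ℕ) (u : V) :
    orbitSum A w k i (Pi.single i' u) = 0 := by
  rw [orbitSum_apply]
  refine Finset.sum_eq_zero fun j _ => ?_
  rw [Pi.single_eq_of_ne, map_zero]
  rintro rfl
  exact h (by rw [← zpow_natCast, ← zpow_neg, PermOrbit.mk_zpow_apply])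

/-- The family of classes, modulo powers of the action of `A`, of the values of a torsion element at
the orbits of size `k`. -/
noncomputable def torsionLabel (x : Submodule.torsion R (TwistCoker A w)) (k : ℕ)
    (o : {o : PermOrbit w // Nat.card o.orbit = k}) : PowCoker.TorsionOrbit A k :=
  Quot.mk _ ⟨evalOut A o.2 x, map_mem_torsion _ x.2⟩

theorem torsionLabel_eq_comp_iff {k : ℕ} (hk : 0 < k)
    {x y : Submodule.torsion R (TwistCoker A w)}
    {π : Equiv.Perm {o : PermOrbit w // Nat.card o.orbit = k}} :
    torsionLabel x k = torsionLabel y k ∘ π ↔ ∀ o, ∃ j : ℕ,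
      (PowCoker.shift A k ^ j) (evalOut A o.2 x) = evalOut A (π o).2 y :=
  funext_iff.trans <| forall_congr' fun _ =>
    (PowCoker.equivalence_exists_shift_pow_torsion A k hk).quot_mk_eq_iff _ _

section Finite

variable [Finite I]

theorem orbitSum_single_self [DecidableEq I] {k : ℕ} {i : I}
    (hk : Nat.card (PermOrbit.mk w i).orbit = k) (u : V) :
    orbitSum A w k i (Pi.single i u) = u := by
  have k_pos : 0 < k :=
    hk ▸ (Finset.mem_Icc.1 (PermOrbit.natCard_orbit_mem_Icc (PermOrbit.mk w i))).1
  rw [PermOrbit.natCard_orbit_mk] at hk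
  rw [orbitSum_apply, Finset.sum_eq_single_of_mem 0 (Finset.mem_range.2 k_pos)]
  · exact Pi.single_eq_same (M := fun _ => V) i u
  · intro j hj hj0
    have pow_apply_ne : (w ^ j) i ≠ i := by
      rw [← Equiv.Perm.iterate_eq_pow]
      exact not_isPeriodicPt_of_pos_of_lt_minimalPeriod hj0 (hk ▸ Finset.mem_range.1 hj)
    rw [Pi.single_eq_of_ne fun h => pow_apply_ne (Equiv.Perm.inv_eq_iff_eq.1 h).symm, map_zero]

variable (A) in
/-- The map from the cokernel of `1 - A ^ |o|` to the cokernel of `1 - w ⊗ A` that puts a vector at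
the representative of the orbit `o`. -/
noncomputable def ofOrbit [DecidableEq I] (o : PermOrbit w) :
    PowCoker A (Nat.card o.orbit) →ₗ[R] TwistCoker A w :=
  Submodule.liftQ _ (Submodule.mkQ _ ∘ₗ LinearMap.single R (fun _ => V) o.out) <| by
    rintro _ ⟨u, rfl⟩
    have := mk_single_pow_apply (A := A) (w := w) (Nat.card o.orbit) o.out u
    rw [PermOrbit.pow_apply_out rfl] at this
    simpa [LinearMap.mem_ker, Pi.single_sub, sub_eq_zero] using this.symm

variable (A w) in
/-- The simultaneous evaluation of the cokernel of `1 - w ⊗ A` at the representatives of all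
orbits. -/
noncomputable def evalAll : TwistCoker A w →ₗ[R] ∀ o : PermOrbit w, PowCoker A (Nat.card o.orbit) :=
  LinearMap.pi fun _ => evalOut A rfl

theorem evalAll_ofOrbit [DecidableEq I] [DecidableEq (PermOrbit w)] (o : PermOrbit w)
    (q : PowCoker A (Nat.card o.orbit)) : evalAll A w (ofOrbit A o q) = Pi.single o q := by
  induction q using Submodule.Quotient.induction_on with
  | H u =>
    ext o'
    change Submodule.Quotient.mk (orbitSum A w _ o'.out (Pi.single o.out u)) = _
    obtain rfl | ho := eq_or_ne o' o
    · rw [Pi.single_eq_same, orbitSum_single_self (by rw [PermOrbit.mk_out])]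
    · rw [Pi.single_eq_of_ne ho, orbitSum_single_of_mk_ne, Submodule.Quotient.mk_zero]
      rwa [PermOrbit.mk_out, PermOrbit.mk_out]

theorem mk_single_mem_range_ofOrbit [DecidableEq I] (i : I) (u : V) :
    (Submodule.Quotient.mk (Pi.single i u) : TwistCoker A w) ∈
      LinearMap.range (ofOrbit A (PermOrbit.mk w i)) := by
  obtain ⟨n, hn⟩ := PermOrbit.exists_pow_apply_eq (PermOrbit.mk_out (PermOrbit.mk w i)).symm
  refine ⟨Submodule.Quotient.mk ((A ^ n) u), ?_⟩
  rw [← mk_single_pow_apply n i u, hn]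
  rfl

theorem evalAll_bijective : Bijective (evalAll A w) := by
  classical
  have := Fintype.ofFinite I
  have := Fintype.ofFinite (PermOrbit w)
  let ofOrbits := LinearMap.lsum R (fun o : PermOrbit w => PowCoker A (Nat.card o.orbit)) R
    (ofOrbit A)
  have evalAll_comp_ofOrbits : evalAll A w ∘ₗ ofOrbits = LinearMap.id :=
    LinearMap.pi_ext fun o q => by
      simp only [ofOrbits, LinearMap.comp_apply, LinearMap.lsum_piSingle, evalAll_ofOrbit,
        LinearMap.id_apply]
  have leftInverse : LeftInverse (evalAll A w) ofOrbits :=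
    LinearMap.congr_fun evalAll_comp_ofOrbits
  have ofOrbits_surjective : Surjective ofOrbits := fun x => by
    induction x using Submodule.Quotient.induction_on with
    | H v =>
      rw [← Finset.univ_sum_single v, ← Submodule.mkQ_apply, map_sum]
      refine (LinearMap.mem_range (f := ofOrbits)).1 (Submodule.sum_mem _ fun i _ => ?_)
      obtain ⟨q, hq⟩ := mk_single_mem_range_ofOrbit (A := A) (w := w) i (v i)
      exact ⟨Pi.single _ q, (LinearMap.lsum_piSingle ..).trans hq⟩
  exact ⟨(leftInverse.rightInverse_of_surjective ofOrbits_surjective).injective,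
    leftInverse.surjective⟩

theorem exists_shift_pow_evalAt_eq {k : ℕ} {i i' : I} (hi : (w ^ k) i = i) (hi' : (w ^ k) i' = i')
    (h : PermOrbit.mk w i = PermOrbit.mk w i') (x : TwistCoker A w) :
    ∃ j : ℕ, (PowCoker.shift A k ^ j) (evalAt A hi x) = evalAt A hi' x := by
  obtain ⟨j, rfl⟩ := PermOrbit.exists_pow_apply_eq h
  exact ⟨j, (evalAt_pow_apply hi hi' x).symm⟩

theorem exists_perm_of_permute (σ : Subgroup.centralizer {w}) (x : TwistCoker A w) (k : ℕ) :
    ∃ π : Equiv.Perm {o : PermOrbit w // Nat.card o.orbit = k}, ∀ o, ∃ j : ℕ,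
      (PowCoker.shift A k ^ j) (evalOut A o.2 x) = evalOut A (π o).2 (permute A w σ x) := by
  have hσ : Commute σ.1 w := Subgroup.mem_centralizer_singleton_iff.1 σ.2
  refine ⟨(PermOrbit.congr σ.1 hσ).subtypePerm fun o => ?_, fun o => ?_⟩
  · rw [PermOrbit.natCard_orbit_congr]
  · have hσo := (PermOrbit.pow_apply_eq_iff_of_commute hσ).2 (PermOrbit.pow_apply_out o.2)
    rw [evalOut, ← evalAt_permute _ σ hσo rfl x]
    refine exists_shift_pow_evalAt_eq _ _ ?_ _
    rw [PermOrbit.mk_out, ← PermOrbit.congr_mk hσ, PermOrbit.mk_out]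
    rfl

theorem exists_permute_eq_of_perm {x y : TwistCoker A w}
    {π : ∀ k, Equiv.Perm {o : PermOrbit w // Nat.card o.orbit = k}}
    (hπ : ∀ k o, ∃ j : ℕ,
      (PowCoker.shift A k ^ j) (evalOut A o.2 x) = evalOut A (π k o).2 y) :
    ∃ σ, permute A w σ x = y := by
  let τ : Equiv.Perm (PermOrbit w) := Equiv.ofFiberEquiv fun k => (π k).symm
  have natCard_τ (o : PermOrbit w) : Nat.card (τ o).orbit = Nat.card o.orbit :=
    Equiv.ofFiberEquiv_map (f := fun o : PermOrbit w => Nat.card o.orbit) (fun k => (π k).symm) o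
  have exists_source (o : PermOrbit w) : ∃ i : I, PermOrbit.mk w i = τ o ∧
      ∀ hi : (w ^ Nat.card o.orbit) i = i, evalAt A hi x = evalOut A rfl y := by
    obtain ⟨j, hj⟩ := hπ _ ((π _).symm ⟨o, rfl⟩)
    rw [Equiv.apply_symm_apply] at hj
    refine ⟨(w ^ j) (τ o).out, ?_, fun hi => ?_⟩
    · rw [← zpow_natCast, PermOrbit.mk_zpow_apply, PermOrbit.mk_out]
    · rw [← hj]
      exact evalAt_pow_apply _ hi x
  choose c mk_c evalAt_c using exists_source
  obtain ⟨ρ, hρ, ρ_out⟩ := PermOrbit.exists_mem_centralizer_forall_out (w := w) (c := c)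
    (by simpa only [mk_c] using τ.surjective)
    (fun o => by rw [mk_c, natCard_τ])
  refine ⟨⟨ρ, hρ⟩⁻¹, evalAll_bijective.injective (funext fun o => ?_)⟩
  have hc : (w ^ Nat.card o.orbit) (c o) = c o := by
    rw [← ρ_out, PermOrbit.pow_apply_eq_iff_of_commute
      (Subgroup.mem_centralizer_singleton_iff.1 hρ), PermOrbit.pow_apply_out rfl]
  exact (evalAt_permute hc _ (PermOrbit.pow_apply_out rfl)
    (Equiv.Perm.inv_eq_iff_eq.2 (ρ_out o).symm) x).trans (evalAt_c o hc)

theorem exists_permute_eq_iff {x y : Submodule.torsion R (TwistCoker A w)} :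
    (∃ σ, permute A w σ x = y) ↔ ∀ k : Finset.Icc 1 (Nat.card I),
      ∃ π : Equiv.Perm {o : PermOrbit w // Nat.card o.orbit = k},
        torsionLabel x k = torsionLabel y k ∘ π := by
  constructor
  · rintro ⟨σ, hσ⟩ k
    obtain ⟨π, hπ⟩ := exists_perm_of_permute σ x.1 k
    exact ⟨π, (torsionLabel_eq_comp_iff (Finset.mem_Icc.1 k.2).1).2 (hσ ▸ hπ)⟩
  · intro h
    have exists_perm (k : ℕ) : ∃ π : Equiv.Perm {o : PermOrbit w // Nat.card o.orbit = k},
        ∀ o, ∃ j : ℕ, (PowCoker.shift A k ^ j) (evalOut A o.2 x.1) = evalOut A (π o).2 y.1 := by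
      by_cases hk : k ∈ Finset.Icc 1 (Nat.card I)
      · obtain ⟨π, hπ⟩ := h ⟨k, hk⟩
        exact ⟨π, (torsionLabel_eq_comp_iff (Finset.mem_Icc.1 hk).1).1 hπ⟩
      · exact ⟨1, fun o => absurd (o.2 ▸ PermOrbit.natCard_orbit_mem_Icc o.1) hk⟩
    choose π hπ using exists_perm
    exact exists_permute_eq_of_perm hπ

theorem torsionLabel_surjective :
    Surjective fun (x : Submodule.torsion R (TwistCoker A w)) (k : Finset.Icc 1 (Nat.card I)) =>
      torsionLabel x (k : ℕ) := by
  intro q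
  let rep (o : PermOrbit w) : Submodule.torsion R (PowCoker A (Nat.card o.orbit)) :=
    (q ⟨_, PermOrbit.natCard_orbit_mem_Icc o⟩ ⟨o, rfl⟩).out
  obtain ⟨x, hx⟩ := evalAll_bijective.surjective fun o => (rep o).1
  have x_mem : x ∈ Submodule.torsion R (TwistCoker A w) :=
    mem_torsion_of_forall_mem_torsion evalAll_bijective.injective fun o => by
      rw [hx]; exact (rep o).2
  refine ⟨⟨x, x_mem⟩, ?_⟩
  funext ⟨k, hk⟩ ⟨o, ho⟩
  obtain rfl : Nat.card o.orbit = k := ho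
  exact (congrArg (Quot.mk _) (Subtype.ext (congrFun hx o))).trans (Quot.out_eq _)

variable (A w) in
theorem card_torsion_orbits :
    Nat.card (Quot fun x y : Submodule.torsion R (TwistCoker A w) => ∃ σ, permute A w σ x = y) =
      ∏ k ∈ Finset.Icc 1 (Nat.card I),
        (Nat.card (PowCoker.TorsionOrbit A k) +
          Nat.card {o : PermOrbit w // Nat.card o.orbit = k} - 1).choose
        (Nat.card {o : PermOrbit w // Nat.card o.orbit = k}) := by
  rw [← Finset.prod_coe_sort]
  exact card_quot_eq_prod_choose torsionLabel_surjective fun _ _ => exists_permute_eq_iff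

end Finite

end TwistCoker

end TwistCoker

theorem range_toLin'_one_sub_coe_pow {R n : Type*} [CommRing R] [Fintype n] [DecidableEq n]
    (γ : Matrix.SpecialLinearGroup n R) (k : ℕ) :
    LinearMap.range (Matrix.toLin' (1 - (γ ^ k : Matrix.SpecialLinearGroup n R).1)) =
      LinearMap.range (1 - Matrix.toLin' γ.1 ^ k) := by
  rw [map_sub, Matrix.toLin'_one, Matrix.SpecialLinearGroup.coe_pow, Matrix.toLin'_pow,
    Module.End.one_eq_id]

theorem stmt12_general {R V I : Type*} [CommRing R] [AddCommGroup V] [Module R V] [Finite I]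
    (A : Module.End R V) (w : Equiv.Perm I) (L : (I → V) →ₗ[R] (I → V))
    (hL : ∀ (v : I → V) (i : I), L v i = v i - A (v (w⁻¹ i)))
    (P : ℕ → Submodule R V) (hP : ∀ k, P k = LinearMap.range (1 - A ^ k))
    [∀ k, Finite (Submodule.torsion R (V ⧸ P k))]
    (g : ∀ k : ℕ, Module.End R (V ⧸ P k))
    (hg : ∀ (k : ℕ) (u : V), g k (Submodule.Quotient.mk u) = Submodule.Quotient.mk (A u))
    (act : Equiv.Perm I → Module.End R ((I → V) ⧸ LinearMap.range L))
    (hact : ∀ σ ∈ Subgroup.centralizer ({w} : Set (Equiv.Perm I)), ∀ v : I → V,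
      act σ (Submodule.Quotient.mk v) = Submodule.Quotient.mk (fun i => v (σ⁻¹ i))) :
    (∀ σ ∈ Subgroup.centralizer ({w} : Set (Equiv.Perm I)), ∀ v : I → V,
      L (fun i => v (σ⁻¹ i)) = fun i => L v (σ⁻¹ i)) ∧
    Nat.card (Quot fun x y : Submodule.torsion R ((I → V) ⧸ LinearMap.range L) =>
      ∃ σ ∈ Subgroup.centralizer ({w} : Set (Equiv.Perm I)),
        act σ (x : (I → V) ⧸ LinearMap.range L) = (y : (I → V) ⧸ LinearMap.range L)) =
    ∏ k ∈ Finset.Icc 1 (Nat.card I),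
      Nat.choose
        (Nat.card (Quot fun x y : Submodule.torsion R (V ⧸ P k) =>
            ∃ j : ℕ, (g k ^ j) (x : V ⧸ P k) = (y : V ⧸ P k)) +
          Nat.card {o : PermOrbit w // Nat.card o.orbit = k} - 1)
        (Nat.card {o : PermOrbit w // Nat.card o.orbit = k}) := by
  obtain rfl : L = oneSubTwist A w := LinearMap.ext fun v => funext (hL v)
  obtain rfl : P = fun k => LinearMap.range (1 - A ^ k) := funext hP
  obtain rfl : g = PowCoker.shift A :=
    funext fun k => Submodule.linearMap_qext _ (LinearMap.ext (hg k))
  have act_eq_permute (σ : Subgroup.centralizer {w}) : act σ = TwistCoker.permute A w σ :=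
    Submodule.linearMap_qext _ (LinearMap.ext (hact σ σ.2))
  refine ⟨fun σ hσ => oneSubTwist_comp_of_commute A w
    (Commute.inv_left (Subgroup.mem_centralizer_singleton_iff.1 hσ)), ?_⟩
  rw [← TwistCoker.card_torsion_orbits A w]
  simp only [← act_eq_permute, Subtype.exists, exists_prop]

/-- let `L` be the endomorphism `Id_{2N} - w ⊗ γ` of `Fin N → (Fin 2 → ℤ)`
and `C` its cokernel.  Every `σ` in the centralizer `Z` of `w` commutes with `L` (via
`(σ · v) i = v (σ⁻¹ i)`), hence `Z` acts on `C` preserving its torsion submodule, and the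
number of orbits of `Z` on `C_tors` equals `∏_{k=1}^N C(c_k(γ) + r_k - 1, r_k)`, where
`r_k` is the number of orbits of `⟨w⟩` on `Fin N` of cardinality `k` and `c_k(γ)` is the
number of orbits of the endomorphism of `Q_k(γ)` induced by `γ` acting on `Q_k(γ)_tors`. -/
theorem stmt12 (γ : Matrix.SpecialLinearGroup (Fin 2) ℤ) (N : ℕ) (hN : 1 ≤ N)
    (w : Equiv.Perm (Fin N))
    (L : (Fin N → Fin 2 → ℤ) →ₗ[ℤ] (Fin N → Fin 2 → ℤ))
    (hL : ∀ (v : Fin N → Fin 2 → ℤ) (i : Fin N),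
      L v i = v i - Matrix.mulVec (γ : Matrix (Fin 2) (Fin 2) ℤ) (v (w⁻¹ i)))
    (g : ∀ k : ℕ, Module.End ℤ (Qk γ k))
    (hg : ∀ (k : ℕ) (v : Fin 2 → ℤ), g k (Submodule.Quotient.mk v) =
      Submodule.Quotient.mk (Matrix.mulVec (γ : Matrix (Fin 2) (Fin 2) ℤ) v))
    (act : Equiv.Perm (Fin N) →
      Module.End ℤ ((Fin N → Fin 2 → ℤ) ⧸ LinearMap.range L))
    (hact : ∀ σ ∈ Subgroup.centralizer ({w} : Set (Equiv.Perm (Fin N))),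
      ∀ v : Fin N → Fin 2 → ℤ,
        act σ (Submodule.Quotient.mk v) =
          Submodule.Quotient.mk (fun i => v (σ⁻¹ i))) :
    (∀ σ ∈ Subgroup.centralizer ({w} : Set (Equiv.Perm (Fin N))),
      ∀ v : Fin N → Fin 2 → ℤ,
        L (fun i => v (σ⁻¹ i)) = fun i => L v (σ⁻¹ i)) ∧
    Nat.card (Quot fun x y :
        Submodule.torsion ℤ ((Fin N → Fin 2 → ℤ) ⧸ LinearMap.range L) =>
      ∃ σ ∈ Subgroup.centralizer ({w} : Set (Equiv.Perm (Fin N))),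
        act σ (x : (Fin N → Fin 2 → ℤ) ⧸ LinearMap.range L) =
          (y : (Fin N → Fin 2 → ℤ) ⧸ LinearMap.range L)) =
    ∏ k ∈ Finset.Icc 1 N,
      Nat.choose
        (Nat.card (Quot fun x y : Submodule.torsion ℤ (Qk γ k) =>
            ∃ j : ℕ, (g k ^ j) (x : Qk γ k) = (y : Qk γ k)) +
          Nat.card {o : MulAction.orbitRel.Quotient (Subgroup.zpowers w) (Fin N) //
            Nat.card o.orbit = k} - 1)
        (Nat.card {o : MulAction.orbitRel.Quotient (Subgroup.zpowers w) (Fin N) //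
          Nat.card o.orbit = k}) := by
  have (k : ℕ) := finite_torsion_int (Qk γ k)
  simpa only [Nat.card_fin] using stmt12_general (Matrix.toLin' γ.1) w L hL _
    (range_toLin'_one_sub_coe_pow γ) g hg act hact
end
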